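/- Let y = A x₀ + e for some x₀ ∈ ℝ^d and e ∈ ℝ^n, let β = max_{1≤i≤d} ‖a_i‖₂, and let α_{2k} > 0 satisfy ‖Ax‖₂ ≥ α_{2k} ‖x‖₁ for every x with at most 2k nonzero entries. Let λ > 0 and suppose x̂ ∈ ℝ^d satisfies F1_λ(x̂) ≤ F1_λ(P_k(x₀)), where F1_λ(x) = ‖Ax − y‖₂ + λ τ_k(x). Then ‖P_k(x̂) − x₀‖₁ ≤ τ_k(x₀) + (1/α_{2k})·(1 + max{1, β/λ})·(‖e‖₂ + β τ_k(x₀)). Moreover, if x̂ itself is k-sparse, then ‖x̂ − x₀‖₁ ≤ (2/α_{2k})‖e‖₂ + (1 + 2β/α_{2k}) τ_k(x₀). -/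

import Mathlib

open Finset Filter Topology

/-- Euclidean (ℓ₂) norm of a vector in ℝ^m. -/
noncomputable def l2norm {m : ℕ} (v : Fin m → ℝ) : ℝ := Real.sqrt (∑ i, v i ^ 2)

/-- The trimmed lasso penalty: the minimum, over index sets Λ of size d − k,
of the ℓ₁ norm of x restricted to Λ. -/
noncomputable def tauTL {d : ℕ} (k : ℕ) (x : Fin d → ℝ) : ℝ :=
  sInf ((fun Λ : Finset (Fin d) => ∑ i ∈ Λ, |x i|) '' {Λ : Finset (Fin d) | Λ.card = d - k})

/-- `p` is a k-sparse vector closest to `x` in ℓ₁ norm (a valid choice of P_k(x)). -/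
def IsKSparseProj {d : ℕ} (k : ℕ) (x p : Fin d → ℝ) : Prop :=
  Set.ncard {i : Fin d | p i ≠ 0} ≤ k ∧
  ∀ z : Fin d → ℝ, Set.ncard {i : Fin d | z i ≠ 0} ≤ k →
    (∑ i, |x i - p i|) ≤ ∑ i, |x i - z i|

/-!
Replacing a vector `x` by its best `k`-sparse approximation raises the residual `‖A x - y‖` by at
most `β τ_k(x)`, because `‖A v‖ ≤ β ‖v‖₁`. Applied to `x₀`, this bounds the objective at `P_k(x₀)`,
hence also at `x̂`, by `‖e‖ + β τ_k(x₀)`. Applied to `x̂`, it bounds the residual of `P_k(x̂)` by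
`max 1 (β / λ)` times the objective at `x̂`. Two `k`-sparse vectors differ by a `2k`-sparse one, so
the lower bound on `A` turns their residuals into a bound on their `ℓ₁` distance.
-/

theorem add_mul_le_max_one_div_mul_add {𝕜 : Type*} [Field 𝕜] [LinearOrder 𝕜]
    [IsStrictOrderedRing 𝕜] {r t b c : 𝕜} (hr : 0 ≤ r) (ht : 0 ≤ t) (hc : 0 < c) :
    r + b * t ≤ max 1 (b / c) * (r + c * t) := by
  have hb : b ≤ max 1 (b / c) * c := (div_le_iff₀ hc).1 (le_max_right _ _)
  calc r + b * t ≤ max 1 (b / c) * r + max 1 (b / c) * c * t :=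
        add_le_add (le_mul_of_one_le_left hr (le_max_left _ _)) (mul_le_mul_of_nonneg_right hb ht)
    _ = max 1 (b / c) * (r + c * t) := by ring

theorem ncard_sub_ne_zero_le {ι M : Type*} [Finite ι] [AddGroup M] (x z : ι → M) :
    {i | (x - z) i ≠ 0}.ncard ≤ {i | x i ≠ 0}.ncard + {i | z i ≠ 0}.ncard :=
  (Set.ncard_le_ncard (Function.support_sub x z)).trans (Set.ncard_union_le _ _)

theorem ncard_ne_zero_le_iff_exists_finset {ι M : Type*} [Fintype ι] [Zero M] {k : ℕ} {z : ι → M} :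
    {i | z i ≠ 0}.ncard ≤ k ↔
      ∃ Λ : Finset ι, #Λ = Fintype.card ι - k ∧ ∀ i ∈ Λ, z i = 0 := by
  classical
  have hncard : {i | z i ≠ 0}.ncard = #{i | z i ≠ 0} := by
    rw [← Set.ncard_coe_finset, coe_filter_univ]
  have hsplit : #{i | z i = 0} + #{i | z i ≠ 0} = Fintype.card ι :=
    card_filter_add_card_filter_not fun i => z i = 0
  constructor
  · intro hz
    obtain ⟨Λ, hΛ, hcard⟩ := exists_subset_card_eq (s := {i | z i = 0})
      (n := Fintype.card ι - k) (by lia)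
    exact ⟨Λ, hcard, fun i hi => (mem_filter.1 (hΛ hi)).2⟩
  · rintro ⟨Λ, hcard, hzero⟩
    have hle : #Λ ≤ #{i | z i = 0} := card_le_card fun i hi => by simp [hzero i hi]
    lia

section TrimmedLasso

variable {d k : ℕ} {x z p : Fin d → ℝ}

theorem tauTL_nonneg (k : ℕ) (x : Fin d → ℝ) : 0 ≤ tauTL k x := by
  refine Real.sInf_nonneg ?_
  rintro _ ⟨Λ, -, rfl⟩
  exact sum_nonneg fun i _ => abs_nonneg _

theorem tauTL_le_sum_abs_sub (x : Fin d → ℝ) (hz : {i | z i ≠ 0}.ncard ≤ k) :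
    tauTL k x ≤ ∑ i, |x i - z i| := by
  obtain ⟨Λ, hcard, hzero⟩ := ncard_ne_zero_le_iff_exists_finset.1 hz
  rw [Fintype.card_fin] at hcard
  calc tauTL k x ≤ ∑ i ∈ Λ, |x i| := csInf_le (Set.toFinite _).bddBelow ⟨Λ, hcard, rfl⟩
    _ = ∑ i ∈ Λ, |x i - z i| := sum_congr rfl fun i hi => by rw [hzero i hi, sub_zero]
    _ ≤ ∑ i, |x i - z i| := sum_le_univ_sum_of_nonneg fun i => abs_nonneg _

theorem tauTL_eq_zero_of_ncard_le (hx : {i | x i ≠ 0}.ncard ≤ k) : tauTL k x = 0 :=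
  (tauTL_nonneg k x).antisymm' <| by simpa using tauTL_le_sum_abs_sub x hx

theorem IsKSparseProj.sum_abs_sub_eq_tauTL (h : IsKSparseProj k x p) :
    ∑ i, |x i - p i| = tauTL k x := by
  refine le_antisymm (le_csInf ?_ ?_) (tauTL_le_sum_abs_sub x h.1)
  · obtain ⟨Λ, hcard, -⟩ := ncard_ne_zero_le_iff_exists_finset.1 h.1
    rw [Fintype.card_fin] at hcard
    exact ⟨_, Λ, hcard, rfl⟩
  · rintro _ ⟨Λ, hcard, rfl⟩
    have hsparse : {i | Λ.piecewise 0 x i ≠ 0}.ncard ≤ k :=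
      ncard_ne_zero_le_iff_exists_finset.2
        ⟨Λ, by rwa [Fintype.card_fin], fun i hi => by simp [hi]⟩
    calc ∑ i, |x i - p i| ≤ ∑ i, |x i - Λ.piecewise 0 x i| := h.2 _ hsparse
      _ = ∑ i ∈ Λ, |x i| := by
        rw [← sum_subset (subset_univ Λ) fun i _ hi => by simp [hi]]
        exact sum_congr rfl fun i hi => by simp [hi]

end TrimmedLasso

section Recovery

variable {E : Type*} [SeminormedAddCommGroup E] [NormedSpace ℝ E]

theorem norm_sum_smul_le_iSup_mul_sum_abs {ι : Type*} [Fintype ι] (a : ι → E) (x : ι → ℝ) :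
    ‖∑ i, x i • a i‖ ≤ (⨆ i, ‖a i‖) * ∑ i, |x i| := by
  rw [mul_sum]
  refine norm_sum_le_of_le _ fun i _ => ?_
  rw [norm_smul, Real.norm_eq_abs, mul_comm]
  exact mul_le_mul_of_nonneg_right (le_ciSup (Finite.bddAbove_range fun i => ‖a i‖) i)
    (abs_nonneg _)

theorem sum_abs_sub_le_of_ncard_le {ι : Type*} [Fintype ι] {k : ℕ} {A : (ι → ℝ) →ₗ[ℝ] E} {α : ℝ}
    (hα : 0 < α)
    (hrip : ∀ x : ι → ℝ, {i | x i ≠ 0}.ncard ≤ 2 * k → α * ∑ i, |x i| ≤ ‖A x‖)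
    {z p : ι → ℝ} (hz : {i | z i ≠ 0}.ncard ≤ k) (hp : {i | p i ≠ 0}.ncard ≤ k) (y : E) :
    ∑ i, |z i - p i| ≤ 1 / α * (‖A z - y‖ + ‖A p - y‖) := by
  have hsparse : {i | (z - p) i ≠ 0}.ncard ≤ 2 * k := by
    linarith [ncard_sub_ne_zero_le z p]
  have hdiff : A (z - p) = (A z - y) - (A p - y) := by
    rw [map_sub, sub_sub_sub_cancel_right]
  rw [one_div_mul_eq_div, le_div_iff₀' hα]
  calc α * ∑ i, |z i - p i| ≤ ‖A (z - p)‖ := hrip (z - p) hsparse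
    _ ≤ ‖A z - y‖ + ‖A p - y‖ := hdiff ▸ norm_sub_le _ _

variable {d k : ℕ} {A : (Fin d → ℝ) →ₗ[ℝ] E} {β : ℝ}

theorem IsKSparseProj.norm_map_sub_le {x p : Fin d → ℝ} (h : IsKSparseProj k x p)
    (hβ : ∀ v, ‖A v‖ ≤ β * ∑ i, |v i|) (y : E) :
    ‖A p - y‖ ≤ ‖A x - y‖ + β * tauTL k x := by
  have hdiff : A p - y = (A x - y) - A (x - p) := by
    rw [map_sub]
    abel
  calc ‖A p - y‖ ≤ ‖A x - y‖ + ‖A (x - p)‖ := hdiff ▸ norm_sub_le _ _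
    _ ≤ ‖A x - y‖ + β * tauTL k x := by
      rw [← h.sum_abs_sub_eq_tauTL]
      gcongr
      exact hβ (x - p)

theorem IsKSparseProj.sum_abs_sub_le_tauTL_add {x₀ p z : Fin d → ℝ} (h : IsKSparseProj k x₀ p)
    {α : ℝ} (hα : 0 < α)
    (hrip : ∀ x : Fin d → ℝ, {i | x i ≠ 0}.ncard ≤ 2 * k → α * ∑ i, |x i| ≤ ‖A x‖)
    (hz : {i | z i ≠ 0}.ncard ≤ k) (y : E) :
    ∑ i, |z i - x₀ i| ≤ tauTL k x₀ + 1 / α * (‖A z - y‖ + ‖A p - y‖) :=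
  calc ∑ i, |z i - x₀ i| ≤ ∑ i, (|x₀ i - p i| + |z i - p i|) :=
        sum_le_sum fun i _ => by
          rw [add_comm, abs_sub_comm (x₀ i)]
          exact abs_sub_le _ _ _
    _ = tauTL k x₀ + ∑ i, |z i - p i| := by rw [sum_add_distrib, h.sum_abs_sub_eq_tauTL]
    _ ≤ tauTL k x₀ + 1 / α * (‖A z - y‖ + ‖A p - y‖) := by
      gcongr
      exact sum_abs_sub_le_of_ncard_le hα hrip hz h.1 y

theorem stmt6_general {y e : E} {x₀ xhat px₀ pxhat : Fin d → ℝ} {α lam : ℝ}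
    (hy : y = A x₀ + e) (hβ : ∀ v, ‖A v‖ ≤ β * ∑ i, |v i|) (hα : 0 < α)
    (hrip : ∀ x : Fin d → ℝ, {i | x i ≠ 0}.ncard ≤ 2 * k → α * ∑ i, |x i| ≤ ‖A x‖)
    (hlam : 0 < lam) (hpx₀ : IsKSparseProj k x₀ px₀) (hpxhat : IsKSparseProj k xhat pxhat)
    (hopt : ‖A xhat - y‖ + lam * tauTL k xhat ≤ ‖A px₀ - y‖ + lam * tauTL k px₀) :
    ∑ i, |pxhat i - x₀ i| ≤
        tauTL k x₀ + 1 / α * (1 + max 1 (β / lam)) * (‖e‖ + β * tauTL k x₀) ∧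
      ({i | xhat i ≠ 0}.ncard ≤ k →
        ∑ i, |xhat i - x₀ i| ≤ 2 / α * ‖e‖ + (1 + 2 * β / α) * tauTL k x₀) := by
  set M := ‖e‖ + β * tauTL k x₀ with hM
  have hpx₀_res : ‖A px₀ - y‖ ≤ M := by
    simpa [hy] using hpx₀.norm_map_sub_le hβ y
  have hobj : ‖A xhat - y‖ + lam * tauTL k xhat ≤ M := by
    rw [tauTL_eq_zero_of_ncard_le hpx₀.1, mul_zero, add_zero] at hopt
    exact hopt.trans hpx₀_res
  constructor
  · have hpxhat_res : ‖A pxhat - y‖ ≤ max 1 (β / lam) * M :=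
      calc ‖A pxhat - y‖ ≤ ‖A xhat - y‖ + β * tauTL k xhat := hpxhat.norm_map_sub_le hβ y
        _ ≤ max 1 (β / lam) * (‖A xhat - y‖ + lam * tauTL k xhat) :=
          add_mul_le_max_one_div_mul_add (norm_nonneg _) (tauTL_nonneg k xhat) hlam
        _ ≤ max 1 (β / lam) * M := by gcongr
    calc ∑ i, |pxhat i - x₀ i| ≤ tauTL k x₀ + 1 / α * (‖A pxhat - y‖ + ‖A px₀ - y‖) :=
          hpx₀.sum_abs_sub_le_tauTL_add hα hrip hpxhat.1 y
      _ ≤ tauTL k x₀ + 1 / α * (max 1 (β / lam) * M + M) := by gcongr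
      _ = tauTL k x₀ + 1 / α * (1 + max 1 (β / lam)) * M := by ring
  · intro hsparse
    have hxhat_res : ‖A xhat - y‖ ≤ M := by
      rwa [tauTL_eq_zero_of_ncard_le hsparse, mul_zero, add_zero] at hobj
    calc ∑ i, |xhat i - x₀ i| ≤ tauTL k x₀ + 1 / α * (‖A xhat - y‖ + ‖A px₀ - y‖) :=
          hpx₀.sum_abs_sub_le_tauTL_add hα hrip hsparse y
      _ ≤ tauTL k x₀ + 1 / α * (M + M) := by gcongr
      _ = 2 / α * ‖e‖ + (1 + 2 * β / α) * tauTL k x₀ := by rw [hM]; ring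

end Recovery

theorem l2norm_eq_norm_toLp {m : ℕ} (v : Fin m → ℝ) : l2norm v = ‖WithLp.toLp 2 v‖ := by
  simp only [l2norm, EuclideanSpace.norm_eq, Real.norm_eq_abs, sq_abs]

theorem norm_toLp_mulVec_le {m ι : Type*} [Fintype m] [Fintype ι] (A : Matrix m ι ℝ) (x : ι → ℝ) :
    ‖WithLp.toLp 2 (A.mulVec x)‖ ≤
      (⨆ i, ‖WithLp.toLp 2 (fun j => A j i)‖) * ∑ i, |x i| := by
  have hcols : WithLp.toLp 2 (A.mulVec x) = ∑ i, x i • WithLp.toLp 2 (fun j => A j i) := by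
    ext j
    simp [Matrix.mulVec, dotProduct, mul_comm]
  rw [hcols]
  exact norm_sum_smul_le_iSup_mul_sum_abs _ x

/-- Sparse recovery guarantee for the power-1 trimmed-lasso objective
F1_λ(x) = ‖Ax − y‖₂ + λ τ_k(x). -/
theorem stmt6 {n d : ℕ} (k : ℕ) (hk : 0 < k) (hkd : k < d)
    (A : Matrix (Fin n) (Fin d) ℝ) (y : Fin n → ℝ)
    (x0 : Fin d → ℝ) (e : Fin n → ℝ) (hy : y = A.mulVec x0 + e)
    (α : ℝ) (hα : 0 < α)
    (hrip : ∀ x : Fin d → ℝ, Set.ncard {i : Fin d | x i ≠ 0} ≤ 2 * k →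
      α * (∑ i, |x i|) ≤ l2norm (A.mulVec x))
    (lam : ℝ) (hlam : 0 < lam)
    (xhat px0 pxhat : Fin d → ℝ)
    (hpx0 : IsKSparseProj k x0 px0) (hpxhat : IsKSparseProj k xhat pxhat)
    (hopt : l2norm (A.mulVec xhat - y) + lam * tauTL k xhat ≤
            l2norm (A.mulVec px0 - y) + lam * tauTL k px0) :
    ((∑ i, |pxhat i - x0 i|) ≤
      tauTL k x0 +
      (1 / α) * (1 + max 1 ((⨆ i : Fin d, l2norm (fun j => A j i)) / lam)) *
        (l2norm e + (⨆ i : Fin d, l2norm (fun j => A j i)) * tauTL k x0)) ∧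
    (Set.ncard {i : Fin d | xhat i ≠ 0} ≤ k →
      (∑ i, |xhat i - x0 i|) ≤
        (2 / α) * l2norm e +
        (1 + 2 * (⨆ i : Fin d, l2norm (fun j => A j i)) / α) * tauTL k x0) := by
  simp only [l2norm_eq_norm_toLp] at hrip hopt ⊢
  exact stmt6_general (A := (WithLp.linearEquiv 2 ℝ (Fin n → ℝ)).symm.toLinearMap ∘ₗ A.mulVecLin)
    (congrArg (WithLp.toLp 2) hy) (norm_toLp_mulVec_le A) hα hrip hlam hpx0 hpxhat hopt
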